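/- arXiv:1101.3135 — 2 statements merged into one kernel-verified Lean document; each statement's English description precedes it below -/
import Mathlib

section
/- For every integer n ≥ 2, the Eulerian polynomial A_n(t) (of degree n−1) has only real roots, all of its roots are negative, and all of its roots are simple (i.e., it has n−1 distinct real negative roots). -/
open Polynomial

noncomputable section

/-- The Eulerian number `A(n,m) = ∑_{ℓ=0}^{m} (−1)^ℓ C(n+1,ℓ) (m−ℓ)^n`. -/
def eulerianNum (n m : ℕ) : ℝ :=
  ∑ ℓ ∈ Finset.range (m + 1), (-1 : ℝ) ^ ℓ * ((n + 1).choose ℓ) * ((m - ℓ : ℕ) : ℝ) ^ n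

/-- The Eulerian polynomial `A_n(t) = ∑_{j=0}^{n−1} A(n,j+1) t^j`. -/
def eulerianPoly (n : ℕ) : Polynomial ℝ :=
  ∑ j ∈ Finset.range n, C (eulerianNum n (j + 1)) * X ^ j

theorem eulerianNum_rec (n m : ℕ) :
    eulerianNum (n + 1) (m + 1) =
      ((m : ℝ) + 1) * eulerianNum n (m + 1) + ((n : ℝ) + 1 - m) * eulerianNum n m := by
  unfold eulerianNum
  rw [Finset.sum_range_succ' _ (m + 1), Finset.sum_range_succ' _ (m + 1), mul_add,
    Finset.mul_sum, Finset.mul_sum, add_right_comm (Finset.sum _ _), ← Finset.sum_add_distrib]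
  congr 1
  · apply Finset.sum_congr rfl
    intro l hl
    have hl' : l ≤ m := by simpa [Nat.lt_succ_iff] using hl
    have e1 : m + 1 - (l + 1) = m - l := by omega
    rw [e1, Nat.cast_sub hl']
    have h1 : (((n + 1 + 1).choose (l + 1) : ℕ) : ℝ)
        = (n + 1).choose l + (n + 1).choose (l + 1) := by
      rw [Nat.choose_succ_succ]; push_cast; ring
    have h2 : ((n : ℝ) + 1 + 1) * (n + 1).choose l
        = (n + 1 + 1).choose (l + 1) * ((l : ℝ) + 1) := by
      exact_mod_cast Nat.add_one_mul_choose_eq (n + 1) l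
    rw [h1] at h2 ⊢
    rw [pow_succ (-1 : ℝ) l, pow_succ _ n]
    linear_combination -(-1 : ℝ) ^ l * ((m : ℝ) - l) ^ n * h2
  · simp
    ring

/-- The polynomials `t A_n(t)`, by recurrence. -/
def auxP : ℕ → Polynomial ℝ
  | 0 => 1
  | n + 1 => X * ((1 - X) * derivative (auxP n)) + C ((n : ℝ) + 1) * (X * auxP n)

/-- The polynomials in `u = 1 / (1 - t)`. -/
def auxQ : ℕ → Polynomial ℝ
  | 0 => X
  | n + 1 => X * (X - 1) * derivative (auxQ n)

theorem eulerianNum_zero (m : ℕ) : eulerianNum 0 m = if m = 0 then 1 else 0 := by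
  rcases m with _ | m
  · simp [eulerianNum]
  · unfold eulerianNum
    rw [Finset.sum_range_succ', Finset.sum_range_succ']
    have : ∑ k ∈ Finset.range m, (-1 : ℝ) ^ (k + 1 + 1) * ((0 + 1).choose (k + 1 + 1) : ℕ)
        * (((m + 1) - (k + 1 + 1) : ℕ) : ℝ) ^ 0 = 0 := by
      apply Finset.sum_eq_zero
      intro k _
      rw [Nat.choose_eq_zero_of_lt (by omega)]
      simp
    rw [this]
    simp

theorem auxP_coeff (n m : ℕ) : (auxP n).coeff m = eulerianNum n m := by
  induction n generalizing m with
  | zero => rw [eulerianNum_zero, auxP, coeff_one]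
  | succ n ih =>
    rw [auxP]
    rcases m with _ | m
    · simp [eulerianNum]
    · rw [eulerianNum_rec, coeff_add, coeff_X_mul, coeff_C_mul, coeff_X_mul, sub_mul, one_mul,
        coeff_sub, coeff_derivative, ih, ih]
      rcases m with _ | m
      · simp
      · rw [coeff_X_mul, coeff_derivative, ih]
        push_cast
        ring

theorem eulerianNum_vanish (n m : ℕ) (h : n < m) : eulerianNum n m = 0 := by
  induction n generalizing m with
  | zero => rw [eulerianNum_zero, if_neg (by omega)]
  | succ n ih =>
    obtain ⟨m, rfl⟩ : ∃ k, m = k + 1 := ⟨m - 1, by omega⟩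
    rw [eulerianNum_rec, ih _ (by omega), ih _ (by omega)]
    simp

theorem eulerianPoly_coeff (n m : ℕ) : (eulerianPoly n).coeff m = eulerianNum n (m + 1) := by
  simp only [eulerianPoly, finsetSum_coeff, coeff_C_mul, coeff_X_pow, mul_ite, mul_one, mul_zero,
    Finset.sum_ite_eq, Finset.mem_range]
  split_ifs with h
  · rfl
  · rw [eulerianNum_vanish _ _ (by omega)]

theorem auxP_eq (n : ℕ) (hn : 1 ≤ n) : auxP n = X * eulerianPoly n := by
  ext m
  rw [auxP_coeff]
  rcases m with _ | m
  · have : n ≠ 0 := by omega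
    simp [eulerianNum, this]
  · rw [coeff_X_mul, eulerianPoly_coeff]

theorem auxP_eval (n : ℕ) (t : ℝ) (ht : t < 1) :
    (auxP n).eval t = (1 - t) ^ (n + 1) * (auxQ n).eval (1 - t)⁻¹ := by
  induction n generalizing t with
  | zero =>
    have : (1 - t) ≠ 0 := by linarith
    simp [auxP, auxQ, this]
  | succ n ih =>
    have h0 : (1 - t) ≠ 0 := by linarith
    have hs : HasDerivAt (fun x : ℝ => 1 - x) (-1) t := by
      simpa using (hasDerivAt_id t).const_sub 1
    have hd := (hs.pow (n + 1)).mul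
      (((auxQ n).hasDerivAt (1 - t)⁻¹).comp t (hs.inv h0))
    have hP := (auxP n).hasDerivAt t
    have he : (fun x => (auxP n).eval x) =ᶠ[nhds t]
        fun x => (1 - x) ^ (n + 1) * (auxQ n).eval (1 - x)⁻¹ := by
      filter_upwards [Iio_mem_nhds ht] with x hx using ih x hx
    have hu := hP.unique (hd.congr_of_eventuallyEq he)
    simp only [auxP, auxQ, eval_add, eval_mul, eval_X, eval_sub, eval_one, eval_C]
    rw [hu, ih t ht]
    simp
    field_simp
    ring

theorem auxQ_roots (n : ℕ) : ∃ u : Fin n → ℝ, StrictMono u ∧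
    (∀ i, u i ∈ Set.Ioo (0 : ℝ) 1) ∧ ∀ i, (derivative (auxQ n)).eval (u i) = 0 := by
  induction n with
  | zero => exact ⟨Fin.elim0, fun i => i.elim0, fun i => i.elim0, fun i => i.elim0⟩
  | succ n ih =>
    obtain ⟨u, hu, hI, hr⟩ := ih
    obtain ⟨v, hv, hvI, hvr⟩ : ∃ v : Fin (n + 2) → ℝ, StrictMono v ∧
        (∀ i, v i ∈ Set.Icc (0 : ℝ) 1) ∧ ∀ i, (auxQ (n + 1)).eval (v i) = 0 := by
      refine ⟨Fin.cons 0 (Fin.snoc u 1 : Fin (n + 1) → ℝ), ?_, ?_, ?_⟩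
      · have hw : StrictMono (Fin.snoc u 1 : Fin (n + 1) → ℝ) := by
          intro i j hij
          induction i using Fin.lastCases with
          | last => exact absurd hij (not_lt.mpr (Fin.le_last j))
          | cast i =>
            induction j using Fin.lastCases with
            | last => simpa using (hI i).2
            | cast j => simpa using hu (by simpa using hij)
        intro i j hij
        induction j using Fin.cases with
        | zero => exact absurd hij (by simp)
        | succ j =>
          induction i using Fin.cases with
          | zero =>
            induction j using Fin.lastCases with
            | last => simp
            | cast j => simpa using (hI j).1
          | succ i => simpa using hw (by simpa using hij)
      · intro i
        induction i using Fin.cases with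
        | zero => simp
        | succ i =>
          induction i using Fin.lastCases with
          | last => simp
          | cast j => simpa using ⟨(hI j).1.le, (hI j).2.le⟩
      · intro i
        induction i using Fin.cases with
        | zero => simp [auxQ]
        | succ i =>
          induction i using Fin.lastCases with
          | last => simp [auxQ]
          | cast j => simp [auxQ, hr j]
    have key : ∀ i : Fin (n + 1), ∃ c ∈ Set.Ioo (v i.castSucc) (v i.succ),
        (derivative (auxQ (n + 1))).eval c = 0 := by
      intro i
      obtain ⟨c, hc, h⟩ := exists_hasDerivAt_eq_zero (f := fun x => (auxQ (n + 1)).eval x)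
        (hv (Fin.castSucc_lt_succ (i := i))) (auxQ (n + 1)).continuous.continuousOn
        (by simp only [hvr]) (fun x _ => (auxQ (n + 1)).hasDerivAt x)
      exact ⟨c, hc, h⟩
    choose c hc hc0 using key
    refine ⟨c, ?_, ?_, hc0⟩
    · intro i j hij
      have h1 : v i.succ ≤ v j.castSucc := hv.monotone (by
        rw [Fin.le_def]; simpa using hij)
      linarith [(hc i).2, (hc j).1]
    · intro i
      exact ⟨(hvI _).1.trans_lt (hc i).1, (hc i).2.trans_le (hvI _).2⟩

theorem factor_of_roots (p : Polynomial ℝ) (k : ℕ) (hp : p ≠ 0) (hd : p.natDegree ≤ k)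
    (a : Fin k → ℝ) (ha : StrictMono a) (hr : ∀ i, p.eval (a i) = 0) :
    p.natDegree = k ∧ p = C p.leadingCoeff * ∏ i, (X - C (a i)) := by
  have hle : (Finset.univ.val.map a) ≤ p.roots := by
    rw [Multiset.le_iff_subset (Finset.univ.nodup.map ha.injective)]
    intro x hx
    obtain ⟨i, -, rfl⟩ := Multiset.mem_map.mp hx
    exact (mem_roots hp).mpr (hr i)
  have hcard : Multiset.card (Finset.univ.val.map a) = k := by simp
  have h1 := Multiset.card_le_card hle
  have h2 := p.card_roots'
  have heq := Multiset.eq_of_le_of_card_le hle (by omega)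
  refine ⟨by omega, ?_⟩
  have h3 := C_leadingCoeff_mul_prod_multiset_X_sub_C (p := p) (by omega)
  rw [← heq, Multiset.map_map] at h3
  exact h3.symm

/-- For every integer `n ≥ 2`, the Eulerian polynomial `A_n` has degree `n − 1` and
has exactly `n − 1` distinct negative real roots, i.e. it has only real roots, all of
them negative and simple. -/
theorem statement1 (n : ℕ) (hn : 2 ≤ n) :
    (eulerianPoly n).natDegree = n - 1 ∧
    ∃ a : Fin (n - 1) → ℝ, StrictMono a ∧ (∀ i, a i < 0) ∧
      eulerianPoly n = C (eulerianPoly n).leadingCoeff * ∏ i, (X - C (a i)) := by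
  obtain ⟨u, hu, hI, hr⟩ := auxQ_roots (n - 1)
  have hp : eulerianPoly n ≠ 0 := by
    intro h
    have h1 := eulerianPoly_coeff n 0
    have hn0 : n ≠ 0 := by omega
    rw [h] at h1
    simp [eulerianNum, Finset.sum_range_succ, hn0] at h1
  have hd : (eulerianPoly n).natDegree ≤ n - 1 := by
    rw [natDegree_le_iff_coeff_eq_zero]
    intro m hm
    rw [eulerianPoly_coeff, eulerianNum_vanish _ _ (by omega)]
  have hneg : ∀ i, 1 - (u i)⁻¹ < 0 := by
    intro i
    have := (one_lt_inv₀ (hI i).1).mpr (hI i).2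
    linarith
  have hmono : StrictMono (fun i => 1 - (u i)⁻¹) := by
    intro i j hij
    have := (inv_lt_inv₀ (hI j).1 (hI i).1).mpr (hu hij)
    simp only
    linarith
  have hroot : ∀ i, (eulerianPoly n).eval (1 - (u i)⁻¹) = 0 := by
    intro i
    have h1 := auxP_eval n (1 - (u i)⁻¹) (by linarith [hneg i])
    rw [auxP_eq n (by omega), eval_mul, eval_X] at h1
    have h2 : auxQ n = X * (X - 1) * derivative (auxQ (n - 1)) := by
      obtain ⟨k, rfl⟩ : ∃ k, n = k + 1 := ⟨n - 1, by omega⟩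
      rfl
    rw [h2, sub_sub_cancel, inv_inv, eval_mul, hr i, mul_zero, mul_zero] at h1
    exact (mul_eq_zero.mp h1).resolve_left (hneg i).ne
  obtain ⟨h1, h2⟩ := factor_of_roots _ _ hp hd _ hmono hroot
  exact ⟨h1, _, hmono, hneg, h2⟩
end
end

section
/- For all integers n ≥ 1 and m ≥ 1, both A_{n,m} and A_{n,m+1} are degree-n polynomials having only real, negative, simple roots, and A_{n,m+1} strictly alternates A_{n,m}: if a_1 < ⋯ < a_n are the roots of A_{n,m} and b_1 < ⋯ < b_n are the roots of A_{n,m+1}, then b_1 < a_1 < b_2 < a_2 < ⋯ < b_n < a_n. -/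
open Polynomial

noncomputable section

/-- The polylogarithm of negative integer order: `Li_{−n}(t) = ∑_{k=1}^∞ k^n t^k`
(the `k = 0` term vanishes for `n ≥ 1`). -/
def fbhLi (n : ℕ) (t : ℂ) : ℂ := ∑' k : ℕ, (k : ℂ) ^ n * t ^ k

/-- One step of the recursion. -/
def fbhStep (s : ℝ) (P : ℝ[X]) : ℝ[X] := (1 - X) * derivative P + C s * P

/-- Iterating in `m` from a base polynomial. -/
def fbhIter (n : ℕ) (P : ℝ[X]) : ℕ → ℝ[X]
  | 0 => P
  | m + 1 => fbhStep ((n : ℝ) + m + 1) (fbhIter n P m)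

/-- `A_{n,0}`. -/
def fbhBase : ℕ → ℝ[X]
  | 0 => 1
  | n + 1 => X * fbhStep ((n : ℝ) + 1) (fbhBase n)

/-- `A_{n,m}`. -/
def fbhA (n m : ℕ) : ℝ[X] := fbhIter n (fbhBase n) m

lemma fbh_sign {n : ℕ} (a : Fin n → ℝ) (ha : StrictMono a) (i : Fin n) :
    0 < (-1 : ℝ) ^ (n - 1 - (i : ℕ)) * ∏ j ∈ Finset.univ.erase i, (a i - a j) := by
  have h1 : (Finset.univ.erase i : Finset (Fin n)) = Finset.Iio i ∪ Finset.Ioi i := by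
    ext j
    simp [lt_or_lt_iff_ne]
  have hd : Disjoint (Finset.Iio i) (Finset.Ioi i) := by
    rw [Finset.disjoint_left]
    intro j hj hj'
    simp at hj hj'
    exact absurd hj (not_lt.2 hj'.le)
  rw [h1, Finset.prod_union hd]
  have h2 : ∏ j ∈ Finset.Ioi i, (a i - a j) =
      (-1 : ℝ) ^ (n - 1 - (i : ℕ)) * ∏ j ∈ Finset.Ioi i, (a j - a i) := by
    rw [← Fin.card_Ioi, ← Finset.prod_const, ← Finset.prod_mul_distrib]
    exact Finset.prod_congr rfl fun j _ => by ring
  have h3 : 0 < ∏ j ∈ Finset.Ioi i, (a j - a i) :=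
    Finset.prod_pos fun j hj => sub_pos.2 (ha (by simpa using hj))
  have h4 : 0 < ∏ j ∈ Finset.Iio i, (a i - a j) :=
    Finset.prod_pos fun j hj => sub_pos.2 (ha (by simpa using hj))
  rw [h2]
  have h5 : (-1 : ℝ) ^ (n - 1 - (i : ℕ)) * (-1 : ℝ) ^ (n - 1 - (i : ℕ)) = 1 := by
    rw [← mul_pow]; simp
  calc (0 : ℝ) < (∏ j ∈ Finset.Iio i, (a i - a j)) * ∏ j ∈ Finset.Ioi i, (a j - a i) :=
        mul_pos h4 h3
    _ = ((-1 : ℝ) ^ (n - 1 - (i : ℕ)) * (-1 : ℝ) ^ (n - 1 - (i : ℕ))) *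
        ((∏ j ∈ Finset.Iio i, (a i - a j)) * ∏ j ∈ Finset.Ioi i, (a j - a i)) := by
        rw [h5, one_mul]
    _ = _ := by ring

lemma fbh_eval_deriv {n : ℕ} (c : ℝ) (a : Fin n → ℝ) (i : Fin n) :
    (derivative (C c * ∏ i, (X - C (a i)))).eval (a i) =
      c * ∏ j ∈ Finset.univ.erase i, (a i - a j) := by
  rw [← Finset.mul_prod_erase Finset.univ _ (Finset.mem_univ i)]
  simp [derivative_mul, eval_prod]

lemma fbh_step_coeff {n : ℕ} (s : ℝ) (P : ℝ[X]) (hP : P.natDegree ≤ n) :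
    (fbhStep s P).natDegree ≤ n ∧ (fbhStep s P).coeff n = (s - n) * P.coeff n := by
  have key : ∀ k, (fbhStep s P).coeff k = (k + 1) * P.coeff (k + 1) + (s - k) * P.coeff k := by
    intro k
    unfold fbhStep
    rw [sub_mul, one_mul, coeff_add, coeff_sub, coeff_C_mul, coeff_derivative]
    rcases k with _ | k
    · simp
    · rw [coeff_X_mul, coeff_derivative]
      push_cast; ring
  constructor
  · rw [natDegree_le_iff_coeff_eq_zero]
    intro k hk
    rw [key, coeff_eq_zero_of_natDegree_lt (by omega), coeff_eq_zero_of_natDegree_lt (by omega)]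
    simp
  · rw [key, coeff_eq_zero_of_natDegree_lt (by omega)]
    simp

lemma fbh_neg_infty {n : ℕ} (Q : ℝ[X]) (hd : Q.natDegree = n) (hl : 0 < Q.leadingCoeff) (M : ℝ) :
    ∃ x < M, 0 < (-1 : ℝ) ^ n * Q.eval x := by
  by_cases h0 : n = 0
  · subst h0
    refine ⟨M - 1, by linarith, ?_⟩
    rw [eq_C_of_natDegree_eq_zero hd]
    rw [leadingCoeff, hd] at hl
    simpa using hl
  have hd' : (C ((-1 : ℝ) ^ n) * Q.comp (-X)).natDegree = n := by
    rw [natDegree_C_mul (pow_ne_zero _ (by norm_num)), natDegree_comp, hd]; simp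
  have hl' : (C ((-1 : ℝ) ^ n) * Q.comp (-X)).leadingCoeff = Q.leadingCoeff := by
    rw [leadingCoeff_mul, leadingCoeff_comp (by simp), hd]
    simp only [leadingCoeff_C, leadingCoeff_neg, leadingCoeff_X]
    rw [mul_comm, mul_assoc, ← mul_pow]; simp
  have ht := Polynomial.tendsto_atTop_of_leadingCoeff_nonneg (C ((-1 : ℝ) ^ n) * Q.comp (-X))
    (natDegree_pos_iff_degree_pos.1 (by omega)) (by rw [hl']; exact hl.le)
  obtain ⟨x, hx1, hx2⟩ :=
    ((ht.eventually_gt_atTop 0).and (Filter.eventually_gt_atTop (-M))).exists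
  refine ⟨-x, by linarith, ?_⟩
  simpa using hx1

lemma fbh_factor {n : ℕ} (Q : ℝ[X]) (hd : Q.natDegree = n) (h0 : Q ≠ 0) (b : Fin n → ℝ)
    (hb : StrictMono b) (hr : ∀ i, Q.eval (b i) = 0) :
    Q = C Q.leadingCoeff * ∏ i, (X - C (b i)) := by
  have hle : Finset.univ.val.map b ≤ Q.roots := by
    rw [Multiset.le_iff_subset (Multiset.Nodup.map hb.injective Finset.univ.nodup)]
    intro x hx
    obtain ⟨i, -, rfl⟩ := Multiset.mem_map.1 hx
    exact (mem_roots h0).2 (hr i)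
  have heq : Finset.univ.val.map b = Q.roots :=
    Multiset.eq_of_le_of_card_le hle (by simpa [hd] using Q.card_roots')
  have := C_leadingCoeff_mul_prod_multiset_X_sub_C (p := Q) (by rw [← heq]; simp [hd])
  rw [← heq, Multiset.map_map] at this
  exact this.symm

lemma fbh_ivt (Q : ℝ[X]) (x y : ℝ) (h : x < y) (hs : Q.eval x * Q.eval y < 0) :
    ∃ z, x < z ∧ z < y ∧ Q.eval z = 0 := by
  have hc : ContinuousOn (fun t => Q.eval t) (Set.Icc x y) := Q.continuous.continuousOn
  rcases mul_neg_iff.1 hs with ⟨h1, h2⟩ | ⟨h1, h2⟩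
  · obtain ⟨z, hz, hz'⟩ := intermediate_value_Ioo' h.le hc ⟨h2, h1⟩
    exact ⟨z, hz.1, hz.2, hz'⟩
  · obtain ⟨z, hz, hz'⟩ := intermediate_value_Ioo h.le hc ⟨h1, h2⟩
    exact ⟨z, hz.1, hz.2, hz'⟩

lemma fbh_step_roots {n : ℕ} (s c : ℝ) (hs : (n : ℝ) < s) (hc : 0 < c) (a : Fin n → ℝ)
    (ha : StrictMono a) (ha0 : ∀ i, a i ≤ 0) (P : ℝ[X])
    (hP : P = C c * ∏ i, (X - C (a i))) :
    ∃ (d : ℝ) (b : Fin n → ℝ), 0 < d ∧ StrictMono b ∧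
      fbhStep s P = C d * ∏ i, (X - C (b i)) ∧ (∀ i, b i < a i) ∧ ∀ j i, j < i → a j < b i := by
  have hPm : (∏ i, (X - C (a i))).Monic := monic_prod_of_monic _ _ fun i _ => monic_X_sub_C _
  have hPd : P.natDegree = n := by
    rw [hP, natDegree_C_mul hc.ne', natDegree_prod_of_monic _ _ fun i _ => monic_X_sub_C _]; simp
  have hPl : P.coeff n = c := by
    rw [← hPd]
    change P.leadingCoeff = c
    rw [hP, leadingCoeff_mul, hPm.leadingCoeff]; simp
  obtain ⟨h1, h2⟩ := fbh_step_coeff s P hPd.le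
  set Q := fbhStep s P with hQ
  rw [hPl] at h2
  have h3 : 0 < Q.coeff n := by rw [h2]; exact mul_pos (by linarith) hc
  have hQd : Q.natDegree = n := le_antisymm h1 (le_natDegree_of_ne_zero h3.ne')
  have hQl : 0 < Q.leadingCoeff := by rw [leadingCoeff, hQd]; exact h3
  have hev : ∀ i : Fin n, 0 < (-1 : ℝ) ^ (n - 1 - (i : ℕ)) * Q.eval (a i) := by
    intro i
    have e1 : P.eval (a i) = 0 := by
      rw [hP, eval_mul, eval_prod, Finset.prod_eq_zero (Finset.mem_univ i)] <;> simp
    have e2 : Q.eval (a i) = (1 - a i) * (c * ∏ j ∈ Finset.univ.erase i, (a i - a j)) := by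
      rw [← fbh_eval_deriv, ← hP, hQ]
      simp [fbhStep, e1]
    rw [e2]
    have := mul_pos (mul_pos (show 0 < 1 - a i by linarith [ha0 i]) hc) (fbh_sign a ha i)
    linarith
  have hroot : ∀ i : Fin n, ∃ z, z < a i ∧ (∀ j, j < i → a j < z) ∧ Q.eval z = 0 := by
    rintro ⟨i, hi⟩
    rcases i with _ | k
    · obtain ⟨x, hx, hx'⟩ := fbh_neg_infty Q hQd hQl (a ⟨0, hi⟩)
      have hh := mul_pos hx' (hev ⟨0, hi⟩)
      obtain ⟨z, hz1, hz2, hz3⟩ := fbh_ivt Q x _ hx (by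
        obtain ⟨l, rfl⟩ : ∃ l, n = l + 1 := ⟨n - 1, by omega⟩
        simp only [Nat.add_sub_cancel, Nat.sub_zero, pow_succ] at hh
        rcases neg_one_pow_eq_or ℝ l with h | h <;> rw [h] at hh <;> linarith)
      exact ⟨z, hz2, fun j hj => absurd hj (by simp [Fin.lt_def]), hz3⟩
    · have hk : k < n := by omega
      have hlt : a ⟨k, hk⟩ < a ⟨k + 1, hi⟩ := ha (by simp [Fin.lt_def])
      have hh := mul_pos (hev ⟨k, hk⟩) (hev ⟨k + 1, hi⟩)
      obtain ⟨z, hz1, hz2, hz3⟩ := fbh_ivt Q _ _ hlt (by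
        obtain ⟨l, rfl⟩ : ∃ l, n = l + k + 2 := ⟨n - k - 2, by omega⟩
        have q1 : l + k + 2 - 1 - k = l + 1 := by omega
        have q2 : l + k + 2 - 1 - (k + 1) = l := by omega
        simp only [q1, q2, pow_succ] at hh
        rcases neg_one_pow_eq_or ℝ l with h | h <;> rw [h] at hh <;> linarith)
      refine ⟨z, hz2, fun j hj => lt_of_le_of_lt (ha.monotone ?_) hz1, hz3⟩
      simp only [Fin.lt_def, Fin.le_def] at hj ⊢
      omega
  choose b hb1 hb2 hb3 using hroot
  have hbm : StrictMono b := fun i j hij => (hb1 i).trans (hb2 j i hij)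
  exact ⟨Q.leadingCoeff, b, hQl, hbm,
    fbh_factor Q hQd (leadingCoeff_ne_zero.1 hQl.ne') b hbm hb3, hb1, fun j i h => hb2 i j h⟩

lemma fbh_base_roots (n : ℕ) : ∃ (c : ℝ) (a : Fin n → ℝ), 0 < c ∧ StrictMono a ∧
    (∀ i, a i ≤ 0) ∧ fbhBase n = C c * ∏ i, (X - C (a i)) := by
  induction n with
  | zero => exact ⟨1, Fin.elim0, one_pos, fun i => i.elim0, fun i => i.elim0, by simp [fbhBase]⟩
  | succ n ih =>
    obtain ⟨c, a, hc, ha, ha0, hP⟩ := ih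
    obtain ⟨d, b, hd, hb, hQ, hba, -⟩ :=
      fbh_step_roots ((n : ℝ) + 1) c (by linarith) hc a ha ha0 _ hP
    have hb0 : ∀ i, b i < 0 := fun i => (hba i).trans_le (ha0 i)
    refine ⟨d, Fin.snoc b 0, hd, ?_, ?_, ?_⟩
    · intro i j hij
      induction j using Fin.lastCases with
      | last =>
        induction i using Fin.lastCases with
        | last => exact absurd hij (lt_irrefl _)
        | cast i => simpa using hb0 i
      | cast j =>
        induction i using Fin.lastCases with
        | last => exact absurd hij (not_lt.2 (Fin.le_last _))
        | cast i => simpa using hb (by simpa using hij)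
    · intro i
      induction i using Fin.lastCases with
      | last => simp
      | cast i => simpa using (hb0 i).le
    · rw [fbhBase, hQ, Fin.prod_univ_castSucc]
      simp
      ring

lemma fbh_A_roots (n m : ℕ) : ∃ (c : ℝ) (a : Fin n → ℝ), 0 < c ∧ StrictMono a ∧
    (∀ i, a i ≤ 0) ∧ fbhA n m = C c * ∏ i, (X - C (a i)) := by
  induction m with
  | zero => exact fbh_base_roots n
  | succ m ih =>
    obtain ⟨c, a, hc, ha, ha0, hP⟩ := ih
    obtain ⟨d, b, hd, hb, hQ, hba, -⟩ :=
      fbh_step_roots ((n : ℝ) + m + 1) c (by linarith [(Nat.cast_nonneg m : (0 : ℝ) ≤ m)])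
        hc a ha ha0 _ hP
    exact ⟨d, b, hd, hb, fun i => ((hba i).trans_le (ha0 i)).le, hQ⟩

lemma fbh_one_sub_ne {t : ℂ} (ht : ‖t‖ < 1) : 1 - t ≠ 0 := by
  intro h
  rw [← sub_eq_zero.1 h] at ht
  simp at ht

lemma fbh_deriv_step (f : ℂ → ℂ) (P : ℝ[X]) (N : ℕ)
    (hf : ∀ t : ℂ, ‖t‖ < 1 → f t = aeval t P / (1 - t) ^ N) (t : ℂ) (ht : ‖t‖ < 1) :
    deriv f t = aeval t (fbhStep N P) / (1 - t) ^ (N + 1) := by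
  have hev : f =ᶠ[nhds t] fun t => aeval t P / (1 - t) ^ N := by
    have : Metric.ball (0 : ℂ) 1 ∈ nhds t := Metric.isOpen_ball.mem_nhds (by simpa using ht)
    filter_upwards [this] with u hu
    exact hf u (by simpa using hu)
  rw [hev.deriv_eq]
  have hne := fbh_one_sub_ne ht
  have h1 : HasDerivAt (fun t : ℂ => aeval t P) (aeval t (derivative P)) t := P.hasDerivAt_aeval t
  have h2 : HasDerivAt (fun t : ℂ => (1 - t) ^ N) (N * (1 - t) ^ (N - 1) * (-1)) t := by
    exact ((hasDerivAt_id t).const_sub 1).pow N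
  have h3 : HasDerivAt (fun t : ℂ => aeval t P / (1 - t) ^ N) _ t :=
    h1.div h2 (pow_ne_zero _ hne)
  rw [h3.deriv]
  simp only [fbhStep, map_add, map_mul, map_sub, map_one, aeval_X, aeval_C]
  rcases N with _ | N
  · simp
    field_simp
  · simp only [Nat.add_sub_cancel]
    rw [div_eq_div_iff (by first | exact pow_ne_zero _ hne | exact pow_ne_zero _ (pow_ne_zero _ hne) | simp) (by first | exact pow_ne_zero _ hne | exact pow_ne_zero _ (pow_ne_zero _ hne) | simp)]
    simp
    ring

lemma fbh_Li_succ (n : ℕ) (t : ℂ) (ht : ‖t‖ < 1) :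
    fbhLi (n + 1) t = t * deriv (fbhLi n) t := by
  obtain ⟨r, hr1, hr2⟩ := exists_between ht
  have hr0 : 0 ≤ r := (norm_nonneg t).trans hr1.le
  have hu : Summable fun k : ℕ => (k : ℝ) ^ n * r ^ k :=
    summable_pow_mul_geometric_of_norm_lt_one n (by rwa [Real.norm_of_nonneg hr0])
  have h := Complex.hasSum_deriv_of_summable_norm (U := Metric.ball (0 : ℂ) r)
    (F := fun (k : ℕ) (t : ℂ) => (k : ℂ) ^ n * t ^ k) (z := t) hu
    (fun k => by fun_prop) Metric.isOpen_ball
    (fun k w hw => by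
      have hw' : ‖w‖ ≤ r := by simpa using (Metric.mem_ball.1 hw).le
      simp only [norm_mul, norm_pow, Complex.norm_natCast]
      gcongr) (by simpa using hr1)
  have h2 := (h.mul_left t).tsum_eq
  change _ = t * deriv (fbhLi n) t at h2
  rw [← h2, fbhLi]
  refine tsum_congr fun k => ?_
  rcases k with _ | k
  · simp
  · simp
    ring

lemma fbh_Li_base (n : ℕ) : ∀ t : ℂ, ‖t‖ < 1 →
    fbhLi n t = aeval t (fbhBase n) / (1 - t) ^ (n + 1) := by
  induction n with
  | zero =>
    intro t ht
    simp [fbhLi, fbhBase, tsum_geometric_of_norm_lt_one ht]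
  | succ n ih =>
    intro t ht
    rw [fbh_Li_succ n t ht, fbh_deriv_step _ _ _ ih t ht, fbhBase]
    simp [mul_div_assoc]

lemma fbh_Li_iter (n m : ℕ) : ∀ t : ℂ, ‖t‖ < 1 →
    iteratedDeriv m (fbhLi n) t = aeval t (fbhA n m) / (1 - t) ^ (n + m + 1) := by
  induction m with
  | zero => simpa [fbhA, fbhIter] using fbh_Li_base n
  | succ m ih =>
    intro t ht
    rw [iteratedDeriv_succ, fbh_deriv_step _ _ _ ih t ht]
    simp [fbhA, fbhIter, add_assoc]

lemma fbh_unique (n m : ℕ) (P : ℝ[X]) (hP : ∀ t : ℂ, ‖t‖ < 1 →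
      iteratedDeriv m (fbhLi n) t = Polynomial.aeval t P / (1 - t) ^ (n + m + 1)) :
    P = fbhA n m := by
  refine Polynomial.eq_of_infinite_eval_eq _ _
    ((Set.Ioo_infinite (zero_lt_one (α := ℝ))).mono fun x hx => ?_)
  have hx' : ‖(x : ℂ)‖ < 1 := by
    rw [Complex.norm_real, Real.norm_of_nonneg hx.1.le]; exact hx.2
  have h := (hP x hx').symm.trans (fbh_Li_iter n m x hx')
  have h2 := (div_left_inj' (pow_ne_zero _ (fbh_one_sub_ne hx'))).1 h
  have e : ∀ R : ℝ[X], aeval (x : ℂ) R = ((R.eval x : ℝ) : ℂ) := fun R => by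
    simpa using (Polynomial.aeval_algebraMap_apply ℂ x R)
  rw [e, e] at h2
  exact_mod_cast h2

/-- For `n, m ≥ 1`, both `A_{n,m}` (here `P`) and `A_{n,m+1}` (here `Q`) — the degree-`n`
real polynomials with `(d^m/dt^m) Li_{−n}(t) = A_{n,m}(t)/(1−t)^{n+m+1}` on the unit
disk — have only real, negative, simple roots, and `A_{n,m+1}` strictly alternates
`A_{n,m}`: their roots `a 0 < ⋯ < a (n-1)` and `b 0 < ⋯ < b (n-1)` satisfy
`b 0 < a 0 < b 1 < a 1 < ⋯ < b (n-1) < a (n-1)`. -/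
theorem statement15 (n m : ℕ) (hn : 1 ≤ n) (hm : 1 ≤ m) (P Q : Polynomial ℝ)
    (hPdeg : P.natDegree = n) (hQdeg : Q.natDegree = n)
    (hP : ∀ t : ℂ, ‖t‖ < 1 →
      iteratedDeriv m (fbhLi n) t = Polynomial.aeval t P / (1 - t) ^ (n + m + 1))
    (hQ : ∀ t : ℂ, ‖t‖ < 1 →
      iteratedDeriv (m + 1) (fbhLi n) t = Polynomial.aeval t Q / (1 - t) ^ (n + (m + 1) + 1)) :
    ∃ a b : Fin n → ℝ, StrictMono a ∧ StrictMono b ∧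
      (∀ i, a i < 0) ∧ (∀ i, b i < 0) ∧
      P = C P.leadingCoeff * ∏ i, (X - C (a i)) ∧
      Q = C Q.leadingCoeff * ∏ i, (X - C (b i)) ∧
      (∀ i, b i < a i) ∧
      (∀ (i : Fin n) (h : (i : ℕ) + 1 < n), a i < b ⟨(i : ℕ) + 1, h⟩) := by
  obtain rfl := fbh_unique n m P hP
  obtain rfl := fbh_unique n (m + 1) Q hQ
  obtain ⟨k, rfl⟩ : ∃ k, m = k + 1 := ⟨m - 1, by omega⟩
  obtain ⟨c₀, a₀, hc₀, ha₀, ha₀0, hP₀⟩ := fbh_A_roots n k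
  have hk : (0 : ℝ) ≤ k := Nat.cast_nonneg k
  obtain ⟨c, a, hc, ha, hPa, haa, -⟩ :=
    fbh_step_roots ((n : ℝ) + k + 1) c₀ (by linarith) hc₀ a₀ ha₀ ha₀0 _ hP₀
  have hP' : fbhA n (k + 1) = C c * ∏ i, (X - C (a i)) := hPa
  have ha0 : ∀ i, a i < 0 := fun i => (haa i).trans_le (ha₀0 i)
  obtain ⟨d, b, hd, hb, hQb, hba, hab⟩ :=
    fbh_step_roots ((n : ℝ) + (k + 1 : ℕ) + 1) c (by push_cast; linarith) hc a ha
      (fun i => (ha0 i).le) _ hP'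
  have hQ' : fbhA n (k + 1 + 1) = C d * ∏ i, (X - C (b i)) := hQb
  have hlead : ∀ (e : ℝ) (f : Fin n → ℝ), (C e * ∏ i, (X - C (f i))).leadingCoeff = e := by
    intro e f
    rw [leadingCoeff_mul, (monic_prod_of_monic _ _ fun i _ => monic_X_sub_C (f i)).leadingCoeff]
    simp
  refine ⟨a, b, ha, hb, ha0, fun i => (hba i).trans (ha0 i), ?_, ?_, hba,
    fun i h => hab _ _ (by simp [Fin.lt_def])⟩
  · rw [hP', hlead]
  · rw [hQ', hlead]
end
end
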